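/- arXiv:2405.19809 — 2 statements merged into one kernel-verified Lean document; each statement's English description precedes it below -/
import Mathlib

section
/- Let F : E → ℝ be twice continuously differentiable, L-smooth and (γ,μ)-strongly quasar convex with respect to its minimizer x* for some 0 < μ ≤ L and γ ∈ (0,1]. Let 0 < s ≤ 1/L and let X : [0,∞) → E be twice differentiable, solving for all t ≥ 0 the high-resolution ODE (1 + ((1−γ)/2)√(μs)) X''(t) + (1+γ)√μ X'(t) + √s ∇²F(X(t))·X'(t) + (1 + γ√(μs)) ∇F(X(t)) = 0, with X(0) = X₀ and X'(0) = 0. Then for all t ≥ 0, F(X(t)) − F(x*) ≤ (7/γ)(F(X₀) − F(x*)) · exp(−γ(√μ/2) t). -/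
open scoped RealInnerProductSpace

/-!
Let `W = m X' + √s ∇F(X) + √μ (X - x*)` with `m` the coefficient of `X''`. The ODE says precisely
that `W' = -γ√μ X' - (1 + γ√(μs)) ∇F(X)`, which contains no second derivative. The weight `α` in
the Lyapunov function `α (F(X) - F(x*)) + ‖W‖² / 2` is chosen so that the terms `⟪∇F(X), X'⟫`
cancel in its derivative; quasar convexity then makes the Lyapunov function decay at rate `γ√μ / 2`.
At time `0`, smoothness bounds `s ‖∇F(X₀)‖²` and quadratic growth bounds `μ ‖X₀ - x*‖²` by multiples
of `F(X₀) - F(x*)`.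
-/

open Set
open scoped Gradient

section RealFunctions

lemma sub_le_sub_of_hasDerivAt_le {f f' g g' : ℝ → ℝ} {a b : ℝ} (hab : a ≤ b)
    (hf : ∀ t ∈ Icc a b, HasDerivAt f (f' t) t) (hg : ∀ t ∈ Icc a b, HasDerivAt g (g' t) t)
    (hle : ∀ t ∈ Ioo a b, f' t ≤ g' t) : f b - f a ≤ g b - g a := by
  have hder (t : ℝ) (ht : t ∈ Icc a b) : HasDerivAt (g - f) (g' t - f' t) t :=
    (hg t ht).sub (hf t ht)
  have hmono : MonotoneOn (g - f) (Icc a b) := by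
    refine monotoneOn_of_hasDerivWithinAt_nonneg (convex_Icc a b)
      (fun t ht ↦ (hder t ht).continuousAt.continuousWithinAt)
      (fun t ht ↦ (hder t (interior_subset ht)).hasDerivWithinAt) fun t ht ↦ ?_
    rw [interior_Icc] at ht
    exact sub_nonneg.2 (hle t ht)
  have := hmono (left_mem_Icc.2 hab) (right_mem_Icc.2 hab) hab
  simp only [Pi.sub_apply] at this
  linarith

lemma le_mul_exp_of_hasDerivWithinAt_le {f f' : ℝ → ℝ} {K a t : ℝ}
    (hf : ∀ τ ∈ Ici a, HasDerivWithinAt f (f' τ) (Ici a) τ)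
    (hle : ∀ τ ∈ Ici a, f' τ ≤ K * f τ) (ht : a ≤ t) :
    f t ≤ f a * Real.exp (K * (t - a)) := by
  rw [← gronwallBound_ε0]
  refine le_gronwallBound_of_liminf_deriv_right_le (f' := f') (b := t)
    (fun τ hτ ↦ (hf τ hτ.1).continuousWithinAt.mono Icc_subset_Ici_self)
    (fun τ hτ _ hr ↦ ((hf τ hτ.1).mono (Ici_subset_Ici.2 hτ.1)).liminf_right_slope_le hr)
    le_rfl (fun τ hτ ↦ ?_) t (right_mem_Icc.2 ht)
  simpa using hle τ hτ.1

end RealFunctions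

section Gradient

variable {E : Type*} [NormedAddCommGroup E] [InnerProductSpace ℝ E] [CompleteSpace E] {F : E → ℝ}

lemma differentiable_gradient_of_contDiff (hF : ContDiff ℝ 2 F) : Differentiable ℝ (∇ F) := by
  have hF' : ContDiff ℝ 1 (fderiv ℝ F) := hF.fderiv_right (by norm_num)
  exact (InnerProductSpace.toDual ℝ E).symm.differentiable.comp (hF'.differentiable (by norm_num))

lemma hasDerivWithinAt_comp_inner_gradient {X : ℝ → E} {v : E} {S : Set ℝ} {t : ℝ}
    (hF : DifferentiableAt ℝ F (X t)) (hX : HasDerivWithinAt X v S t) :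
    HasDerivWithinAt (fun τ ↦ F (X τ)) ⟪∇ F (X t), v⟫ S t :=
  hF.hasGradientAt.hasFDerivAt.comp_hasDerivWithinAt t hX

lemma hasDerivAt_comp_line_inner_gradient {x d : E} {t : ℝ}
    (hF : DifferentiableAt ℝ F (x + t • d)) :
    HasDerivAt (fun τ : ℝ ↦ F (x + τ • d)) ⟪∇ F (x + t • d), d⟫ t := by
  have hline : HasDerivAt (fun τ : ℝ ↦ x + τ • d) d t := by
    simpa using ((hasDerivAt_id t).smul_const d).const_add x
  exact hasDerivWithinAt_univ.1
    (hasDerivWithinAt_comp_inner_gradient hF hline.hasDerivWithinAt)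

lemma apply_add_le_of_norm_gradient_sub_le (hF : Differentiable ℝ F) {L : ℝ} {x : E}
    (hL : ∀ y, ‖∇ F y - ∇ F x‖ ≤ L * ‖y - x‖) (d : E) :
    F (x + d) ≤ F x + ⟪∇ F x, d⟫ + L / 2 * ‖d‖ ^ 2 := by
  have hslope (τ : ℝ) (hτ : τ ∈ Ioo 0 1) :
      ⟪∇ F (x + τ • d), d⟫ ≤ ⟪∇ F x, d⟫ + L * ‖d‖ ^ 2 * τ := by
    have hnorm : ‖∇ F (x + τ • d) - ∇ F x‖ ≤ L * (τ * ‖d‖) := by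
      simpa [norm_smul, abs_of_pos hτ.1] using hL (x + τ • d)
    calc ⟪∇ F (x + τ • d), d⟫ = ⟪∇ F x, d⟫ + ⟪∇ F (x + τ • d) - ∇ F x, d⟫ := by
          rw [inner_sub_left]; ring
      _ ≤ ⟪∇ F x, d⟫ + L * (τ * ‖d‖) * ‖d‖ := by
          gcongr
          exact (real_inner_le_norm _ _).trans (by gcongr)
      _ = ⟪∇ F x, d⟫ + L * ‖d‖ ^ 2 * τ := by ring
  have hquad (τ : ℝ) : HasDerivAt (fun τ ↦ ⟪∇ F x, d⟫ * τ + L / 2 * ‖d‖ ^ 2 * τ ^ 2)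
      (⟪∇ F x, d⟫ + L * ‖d‖ ^ 2 * τ) τ := by
    refine (((hasDerivAt_id' τ).const_mul _).add ((hasDerivAt_pow 2 τ).const_mul _)).congr_deriv ?_
    norm_num
    ring
  have := sub_le_sub_of_hasDerivAt_le zero_le_one
    (fun τ _ ↦ hasDerivAt_comp_line_inner_gradient (hF (x + τ • d))) (fun τ _ ↦ hquad τ) hslope
  simp only [one_smul, zero_smul, add_zero] at this
  linarith

lemma norm_gradient_sq_le_of_forall_le (hF : Differentiable ℝ F) {L c : ℝ} (hL : 0 < L) {x : E}
    (hLip : ∀ y, ‖∇ F y - ∇ F x‖ ≤ L * ‖y - x‖) (hc : ∀ y, c ≤ F y) :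
    ‖∇ F x‖ ^ 2 ≤ 2 * L * (F x - c) := by
  have hstep : c ≤ F x - ‖∇ F x‖ ^ 2 / (2 * L) := calc
    c ≤ F (x + -L⁻¹ • ∇ F x) := hc _
    _ ≤ F x + ⟪∇ F x, -L⁻¹ • ∇ F x⟫ + L / 2 * ‖-L⁻¹ • ∇ F x‖ ^ 2 :=
      apply_add_le_of_norm_gradient_sub_le hF hLip _
    _ = F x - ‖∇ F x‖ ^ 2 / (2 * L) := by
      rw [real_inner_smul_right, real_inner_self_eq_norm_sq, norm_smul, norm_neg,
        Real.norm_of_nonneg (inv_nonneg.2 hL.le)]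
      field_simp
      ring
  rw [le_sub_comm, div_le_iff₀ (by positivity)] at hstep
  linarith

/-- `F` is `(γ, μ)`-strongly quasar convex with respect to its minimizer `z`. -/
structure StronglyQuasarConvex (F : E → ℝ) (γ μ : ℝ) (z : E) : Prop where
  apply_le (x : E) : F z ≤ F x
  add_inner_add_le (x : E) : F x + 1 / γ * ⟪∇ F x, z - x⟫ + μ / 2 * ‖z - x‖ ^ 2 ≤ F z

namespace StronglyQuasarConvex

variable {γ μ : ℝ} {z : E}

lemma le_inner (h : StronglyQuasarConvex F γ μ z) (hγ : 0 < γ) (x : E) :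
    γ * (F x - F z + μ / 2 * ‖x - z‖ ^ 2) ≤ ⟪∇ F x, x - z⟫ := by
  have hx := h.add_inner_add_le x
  rw [← neg_sub x z, inner_neg_right, norm_neg, mul_neg, one_div_mul_eq_div] at hx
  rw [← le_div_iff₀' hγ]
  linarith

lemma quadratic_growth (h : StronglyQuasarConvex F γ μ z) (hF : Differentiable ℝ F) (hγ : 0 < γ)
    (x : E) : γ * μ / 4 * ‖x - z‖ ^ 2 ≤ F x - F z := by
  have hslope (τ : ℝ) (hτ : τ ∈ Ioo 0 1) :
      γ * μ / 2 * ‖x - z‖ ^ 2 * τ ≤ ⟪∇ F (z + τ • (x - z)), x - z⟫ := by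
    have hle := h.le_inner hγ (z + τ • (x - z))
    rw [add_sub_cancel_left, real_inner_smul_right, norm_smul, Real.norm_of_nonneg hτ.1.le] at hle
    have hgap := mul_nonneg hγ.le (sub_nonneg.2 (h.apply_le (z + τ • (x - z))))
    refine le_of_mul_le_mul_left ?_ hτ.1
    linarith
  have hquad (τ : ℝ) : HasDerivAt (fun τ ↦ γ * μ / 4 * ‖x - z‖ ^ 2 * τ ^ 2)
      (γ * μ / 2 * ‖x - z‖ ^ 2 * τ) τ := by
    refine ((hasDerivAt_pow 2 τ).const_mul _).congr_deriv ?_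
    norm_num
    ring
  have := sub_le_sub_of_hasDerivAt_le zero_le_one (fun τ _ ↦ hquad τ)
    (fun τ _ ↦ hasDerivAt_comp_line_inner_gradient (hF (z + τ • (x - z)))) hslope
  simpa using this

end StronglyQuasarConvex

end Gradient

namespace HighResolutionODE

/-- The coefficient `m` of `X''` in the high-resolution ODE, as a function of `γ` and
`q = √(μs)`. -/
noncomputable def inertia (γ q : ℝ) : ℝ := 1 + (1 - γ) / 2 * q

/-- The weight `α` of `F(X) - F(x*)` in the Lyapunov function, as a function of `γ` and
`q = √(μs)`. -/
noncomputable def potentialWeight (γ q : ℝ) : ℝ := (1 + γ * q) * inertia γ q + γ * q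

section Coefficients

variable {γ q : ℝ}

lemma one_le_inertia (hγ : γ ≤ 1) (hq : 0 ≤ q) : 1 ≤ inertia γ q :=
  le_add_of_nonneg_right (mul_nonneg (by linarith) hq)

lemma inertia_le (hγ : 0 ≤ γ) (hq₀ : 0 ≤ q) (hq₁ : q ≤ 1) : inertia γ q ≤ 3 / 2 := by
  unfold inertia
  linarith [mul_nonneg hγ hq₀]

lemma one_le_potentialWeight (hγ₀ : 0 ≤ γ) (hγ₁ : γ ≤ 1) (hq : 0 ≤ q) :
    1 ≤ potentialWeight γ q := by
  have hγq : 0 ≤ γ * q := mul_nonneg hγ₀ hq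
  have : 1 ≤ (1 + γ * q) * inertia γ q :=
    one_le_mul_of_one_le_of_one_le (by linarith) (one_le_inertia hγ₁ hq)
  unfold potentialWeight
  linarith

lemma potentialWeight_le (hγ₀ : 0 ≤ γ) (hγ₁ : γ ≤ 1) (hq₀ : 0 ≤ q) (hq₁ : q ≤ 1) :
    potentialWeight γ q ≤ 2 * (1 + γ * q) := by
  have hγq₀ : 0 ≤ γ * q := mul_nonneg hγ₀ hq₀
  have hγq₁ : γ * q ≤ 1 := mul_le_one₀ hγ₁ hq₀ hq₁
  have : (1 + γ * q) * inertia γ q ≤ (1 + γ * q) * (3 / 2) :=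
    mul_le_mul_of_nonneg_left (inertia_le hγ₀ hq₀ hq₁) (by linarith)
  unfold potentialWeight
  linarith

end Coefficients

section Dissipation

variable {E : Type*} [NormedAddCommGroup E] [InnerProductSpace ℝ E]

lemma energy_derivative_eq (v g y : E) (γ a r m : ℝ) :
    ((1 + γ * (a * r)) * m + γ * (a * r)) * ⟪g, v⟫
        + ⟪m • v + r • g + a • y, -((γ * a) • v) - (1 + γ * (a * r)) • g⟫
      = -(γ * a * (m * ‖v‖ ^ 2 + ⟪a • y, v⟫)
          + (1 + γ * (a * r)) * (r * ‖g‖ ^ 2 + a * ⟪g, y⟫)) := by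
  simp only [inner_add_left, inner_sub_right, inner_neg_right, real_inner_smul_left,
    real_inner_smul_right, real_inner_self_eq_norm_sq, real_inner_comm g v, real_inner_comm g y]
  ring

lemma norm_add_add_sq_le (p q w : E) :
    ‖p + q + w‖ ^ 2 ≤ 2 * ‖p‖ ^ 2 + 4 * ‖q‖ ^ 2 + 4 * ‖w‖ ^ 2 := by
  have h₁ := parallelogram_law_with_norm ℝ p (q + w)
  have h₂ := parallelogram_law_with_norm ℝ q w
  rw [add_assoc]
  nlinarith [sq_nonneg ‖p - (q + w)‖, sq_nonneg ‖q - w‖]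

lemma norm_smul_add_add_sq_le {m : ℝ} (hm₁ : 1 ≤ m) (hm₂ : m ≤ 2) (v G Y : E) :
    1 / 4 * ‖m • v + G + Y‖ ^ 2 ≤ m * ‖v‖ ^ 2 + ⟪Y, v⟫ + ‖G‖ ^ 2 + 1 / 2 * ‖Y‖ ^ 2 := by
  have hsplit : m • v + G + Y = (Y + v) + (m - 1) • v + G := by module
  have hm : (m - 1) ^ 2 ≤ m - 1 / 2 := by nlinarith
  calc 1 / 4 * ‖m • v + G + Y‖ ^ 2
      ≤ 1 / 4 * (2 * ‖Y + v‖ ^ 2 + 4 * ‖(m - 1) • v‖ ^ 2 + 4 * ‖G‖ ^ 2) := by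
        rw [hsplit]
        gcongr
        exact norm_add_add_sq_le _ _ _
    _ = 1 / 2 * ‖Y + v‖ ^ 2 + (m - 1) ^ 2 * ‖v‖ ^ 2 + ‖G‖ ^ 2 := by
        rw [norm_smul, mul_pow, Real.norm_eq_abs, sq_abs]
        ring
    _ ≤ 1 / 2 * ‖Y + v‖ ^ 2 + (m - 1 / 2) * ‖v‖ ^ 2 + ‖G‖ ^ 2 := by gcongr
    _ = m * ‖v‖ ^ 2 + ⟪Y, v⟫ + ‖G‖ ^ 2 + 1 / 2 * ‖Y‖ ^ 2 := by
        rw [norm_add_sq_real]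
        ring

lemma energy_derivative_le (v g y : E) {f a r γ : ℝ} (ha : 0 ≤ a) (hr : 0 ≤ r)
    (har : a * r ≤ 1) (hγ₀ : 0 ≤ γ) (hγ₁ : γ ≤ 1) (hf : 0 ≤ f)
    (hgy : γ * (f + a ^ 2 / 2 * ‖y‖ ^ 2) ≤ ⟪g, y⟫) :
    potentialWeight γ (a * r) * ⟪g, v⟫
        + ⟪inertia γ (a * r) • v + r • g + a • y, -((γ * a) • v) - (1 + γ * (a * r)) • g⟫
      ≤ -(γ * a / 2) * (potentialWeight γ (a * r) * f
          + 1 / 2 * ‖inertia γ (a * r) • v + r • g + a • y‖ ^ 2) := by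
  have har₀ : 0 ≤ a * r := mul_nonneg ha hr
  have hγa : 0 ≤ γ * a := mul_nonneg hγ₀ ha
  have hinner : γ * a * ((1 + γ * (a * r)) * f + 1 / 2 * ‖a • y‖ ^ 2)
      ≤ (1 + γ * (a * r)) * (a * ⟪g, y⟫) := by
    have hmul : (1 + γ * (a * r)) * (a * (γ * (f + a ^ 2 / 2 * ‖y‖ ^ 2)))
        ≤ (1 + γ * (a * r)) * (a * ⟪g, y⟫) := by gcongr
    have hy : 0 ≤ γ * (a * r) * (γ * a * (a ^ 2 / 2 * ‖y‖ ^ 2)) := by positivity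
    rw [norm_smul, mul_pow, Real.norm_eq_abs, sq_abs]
    linarith
  have hgrad : γ * a * ‖r • g‖ ^ 2 ≤ (1 + γ * (a * r)) * (r * ‖g‖ ^ 2) := calc
    γ * a * ‖r • g‖ ^ 2 = γ * (a * r) * (r * ‖g‖ ^ 2) := by
      rw [norm_smul, Real.norm_of_nonneg hr]
      ring
    _ ≤ (1 + γ * (a * r)) * (r * ‖g‖ ^ 2) := by gcongr; linarith
  have hpotential : γ * a * (potentialWeight γ (a * r) * f)
      ≤ γ * a * (2 * (1 + γ * (a * r)) * f) := by
    gcongr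
    exact potentialWeight_le hγ₀ hγ₁ har₀ har
  have hkinetic := mul_le_mul_of_nonneg_left (norm_smul_add_add_sq_le (one_le_inertia hγ₁ har₀)
    ((inertia_le hγ₀ har₀ har).trans (by norm_num)) v (r • g) (a • y)) hγa
  rw [potentialWeight, energy_derivative_eq, ← potentialWeight]
  linarith

end Dissipation

variable {E : Type*} [NormedAddCommGroup E] [InnerProductSpace ℝ E] [CompleteSpace E]

/-- `X : [0, ∞) → E`, with velocity `X'` and acceleration `X''`, solves the high-resolution ODE
of `F`. The values on `(-∞, 0)` are irrelevant, and derivatives at `0` are one-sided. -/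
structure IsSolution (F : E → ℝ) (γ μ s : ℝ) (X X' X'' : ℝ → E) : Prop where
  hasDerivWithinAt : ∀ t ∈ Ici 0, HasDerivWithinAt X (X' t) (Ici 0) t
  hasDerivWithinAt_velocity : ∀ t ∈ Ici 0, HasDerivWithinAt X' (X'' t) (Ici 0) t
  ode : ∀ t ∈ Ici 0, (1 + (1 - γ) / 2 * √(μ * s)) • X'' t + ((1 + γ) * √μ) • X' t
    + √s • fderiv ℝ (∇ F) (X t) (X' t) + (1 + γ * √(μ * s)) • ∇ F (X t) = 0

/-- The vector `W = m v + √s ∇F(x) + √μ (x - z)` at position `x` and velocity `v`, whose square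
norm is the kinetic part of the Lyapunov function. -/
noncomputable def phase (F : E → ℝ) (z : E) (γ μ s : ℝ) (x v : E) : E :=
  inertia γ √(μ * s) • v + √s • ∇ F x + √μ • (x - z)

/-- The Lyapunov function of the high-resolution ODE at position `x` and velocity `v`. -/
noncomputable def energy (F : E → ℝ) (z : E) (γ μ s : ℝ) (x v : E) : ℝ :=
  potentialWeight γ √(μ * s) * (F x - F z) + 1 / 2 * ‖phase F z γ μ s x v‖ ^ 2

variable {F : E → ℝ} {z : E} {γ μ s : ℝ} {X X' X'' : ℝ → E}

lemma potentialWeight_mul_le_energy (x v : E) :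
    potentialWeight γ √(μ * s) * (F x - F z) ≤ energy F z γ μ s x v :=
  le_add_of_nonneg_right (by positivity)

lemma energy_zero_le (hqc : StronglyQuasarConvex F γ μ z) (hF : Differentiable ℝ F)
    (hμ : 0 ≤ μ) (hγ₀ : 0 < γ) (hγ₁ : γ ≤ 1) (hs : 0 ≤ s) {x : E}
    (hgrad : s * ‖∇ F x‖ ^ 2 ≤ 2 * (F x - F z)) :
    energy F z γ μ s x 0 ≤ potentialWeight γ √(μ * s) * (7 / γ * (F x - F z)) := by
  have hgap : 0 ≤ F x - F z := sub_nonneg.2 (hqc.apply_le x)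
  have hdist : μ * ‖x - z‖ ^ 2 ≤ 4 / γ * (F x - F z) := by
    rw [div_mul_eq_mul_div, le_div_iff₀ hγ₀]
    linarith [hqc.quadratic_growth hF hγ₀ x]
  have hphase : 1 / 2 * ‖phase F z γ μ s x 0‖ ^ 2 ≤ s * ‖∇ F x‖ ^ 2 + μ * ‖x - z‖ ^ 2 := by
    have hpar := parallelogram_law_with_norm ℝ (√s • ∇ F x) (√μ • (x - z))
    have hgsq : ‖√s • ∇ F x‖ ^ 2 = s * ‖∇ F x‖ ^ 2 := by
      rw [norm_smul, mul_pow, Real.norm_eq_abs, sq_abs, Real.sq_sqrt hs]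
    have hysq : ‖√μ • (x - z)‖ ^ 2 = μ * ‖x - z‖ ^ 2 := by
      rw [norm_smul, mul_pow, Real.norm_eq_abs, sq_abs, Real.sq_sqrt hμ]
    rw [phase, smul_zero, zero_add, ← hgsq, ← hysq]
    nlinarith [sq_nonneg ‖√s • ∇ F x - √μ • (x - z)‖]
  have hcoef : potentialWeight γ √(μ * s) + 2 + 4 / γ
      ≤ potentialWeight γ √(μ * s) * (7 / γ) := by
    have hα : 1 ≤ potentialWeight γ √(μ * s) :=
      one_le_potentialWeight hγ₀.le hγ₁ (Real.sqrt_nonneg _)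
    rw [← mul_div_assoc, add_div' _ _ _ hγ₀.ne']
    gcongr
    nlinarith
  calc energy F z γ μ s x 0
      ≤ (potentialWeight γ √(μ * s) + 2 + 4 / γ) * (F x - F z) := by
        unfold energy
        linarith
    _ ≤ potentialWeight γ √(μ * s) * (7 / γ) * (F x - F z) := by gcongr
    _ = potentialWeight γ √(μ * s) * (7 / γ * (F x - F z)) := mul_assoc _ _ _

namespace IsSolution

lemma hasDerivWithinAt_phase (hX : IsSolution F γ μ s X X' X'') (hF' : Differentiable ℝ (∇ F))
    {t : ℝ} (ht : t ∈ Ici 0) :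
    HasDerivWithinAt (fun τ ↦ phase F z γ μ s (X τ) (X' τ))
      (-((γ * √μ) • X' t) - (1 + γ * √(μ * s)) • ∇ F (X t)) (Ici 0) t := by
  have hgrad := (hF' (X t)).hasFDerivAt.comp_hasDerivWithinAt t (hX.hasDerivWithinAt t ht)
  refine ((((hX.hasDerivWithinAt_velocity t ht).const_smul _).add (hgrad.const_smul _)).add
    (((hX.hasDerivWithinAt t ht).sub_const z).const_smul _)).congr_deriv ?_
  rw [← sub_eq_zero, ← hX.ode t ht, inertia]
  module

lemma hasDerivWithinAt_energy (hX : IsSolution F γ μ s X X' X'') (hF : Differentiable ℝ F)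
    (hF' : Differentiable ℝ (∇ F)) {t : ℝ} (ht : t ∈ Ici 0) :
    HasDerivWithinAt (fun τ ↦ energy F z γ μ s (X τ) (X' τ))
      (potentialWeight γ √(μ * s) * ⟪∇ F (X t), X' t⟫ + ⟪phase F z γ μ s (X t) (X' t),
        -((γ * √μ) • X' t) - (1 + γ * √(μ * s)) • ∇ F (X t)⟫) (Ici 0) t := by
  have hpotential :=
    (hasDerivWithinAt_comp_inner_gradient (hF (X t)) (hX.hasDerivWithinAt t ht)).sub_const (F z)
  have hkinetic := (hX.hasDerivWithinAt_phase (z := z) hF' ht).norm_sq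
  refine ((hpotential.const_mul _).add (hkinetic.const_mul (1 / 2))).congr_deriv ?_
  ring

lemma energy_le (hX : IsSolution F γ μ s X X' X'') (hqc : StronglyQuasarConvex F γ μ z)
    (hF : Differentiable ℝ F) (hF' : Differentiable ℝ (∇ F)) (hμ : 0 ≤ μ) (hγ₀ : 0 < γ)
    (hγ₁ : γ ≤ 1) (hμs : μ * s ≤ 1) {t : ℝ} (ht : 0 ≤ t) :
    energy F z γ μ s (X t) (X' t)
      ≤ energy F z γ μ s (X 0) (X' 0) * Real.exp (-γ * (√μ / 2) * t) := by
  have hdecay := le_mul_exp_of_hasDerivWithinAt_le (K := -(γ * √μ / 2))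
    (fun τ hτ ↦ hX.hasDerivWithinAt_energy (z := z) hF hF' hτ) (fun τ _ ↦ ?_) ht
  · convert hdecay using 3
    ring
  · have hq : √μ * √s ≤ 1 := by
      rw [← Real.sqrt_mul hμ]
      exact Real.sqrt_le_one.2 hμs
    have hgy : γ * (F (X τ) - F z + √μ ^ 2 / 2 * ‖X τ - z‖ ^ 2) ≤ ⟪∇ F (X τ), X τ - z⟫ := by
      rw [Real.sq_sqrt hμ]
      exact hqc.le_inner hγ₀ (X τ)
    rw [energy, phase, Real.sqrt_mul hμ]
    exact energy_derivative_le (X' τ) (∇ F (X τ)) (X τ - z) (Real.sqrt_nonneg μ)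
      (Real.sqrt_nonneg s) hq hγ₀.le hγ₁ (sub_nonneg.2 (hqc.apply_le (X τ))) hgy

end IsSolution

end HighResolutionODE

open HighResolutionODE in
theorem stmt_9_general {E : Type*} [NormedAddCommGroup E] [InnerProductSpace ℝ E]
    [CompleteSpace E] {F : E → ℝ} (hF : Differentiable ℝ F) (hF' : Differentiable ℝ (∇ F))
    {L μ γ s : ℝ} (hμ : 0 < μ) (hμL : μ ≤ L) (hγ₀ : 0 < γ) (hγ₁ : γ ≤ 1)
    (hLip : ∀ x y, ‖∇ F x - ∇ F y‖ ≤ L * ‖x - y‖) {z : E} (hqc : StronglyQuasarConvex F γ μ z)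
    (hs₀ : 0 ≤ s) (hs₁ : s ≤ 1 / L) {X X' X'' : ℝ → E} (hX : IsSolution F γ μ s X X' X'')
    (hX₀ : X' 0 = 0) {t : ℝ} (ht : 0 ≤ t) :
    F (X t) - F z ≤ 7 / γ * (F (X 0) - F z) * Real.exp (-γ * (√μ / 2) * t) := by
  have hL : 0 < L := hμ.trans_le hμL
  have hsL : s * L ≤ 1 := (le_div_iff₀ hL).1 hs₁
  have hμs : μ * s ≤ 1 := by linarith [mul_le_mul_of_nonneg_right hμL hs₀]
  have hgrad : s * ‖∇ F (X 0)‖ ^ 2 ≤ 2 * (F (X 0) - F z) := calc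
    s * ‖∇ F (X 0)‖ ^ 2 ≤ s * (2 * L * (F (X 0) - F z)) := by
      gcongr
      exact norm_gradient_sq_le_of_forall_le hF hL (hLip · (X 0)) hqc.apply_le
    _ = s * L * (2 * (F (X 0) - F z)) := by ring
    _ ≤ 2 * (F (X 0) - F z) :=
      mul_le_of_le_one_left (by linarith [hqc.apply_le (X 0)]) hsL
  have hα : 0 < potentialWeight γ √(μ * s) :=
    one_pos.trans_le (one_le_potentialWeight hγ₀.le hγ₁ (Real.sqrt_nonneg _))
  refine le_of_mul_le_mul_left ?_ hα
  calc potentialWeight γ √(μ * s) * (F (X t) - F z)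
      ≤ energy F z γ μ s (X t) (X' t) := potentialWeight_mul_le_energy _ _
    _ ≤ energy F z γ μ s (X 0) 0 * Real.exp (-γ * (√μ / 2) * t) :=
      hX₀ ▸ hX.energy_le hqc hF hF' hμ.le hγ₀ hγ₁ hμs ht
    _ ≤ potentialWeight γ √(μ * s) * (7 / γ * (F (X 0) - F z))
          * Real.exp (-γ * (√μ / 2) * t) := by
      gcongr
      exact energy_zero_le hqc hF hμ.le hγ₀ hγ₁ hs₀ hgrad
    _ = _ := mul_assoc _ _ _

/-- exponential convergence of the values along the solution of the
high resolution ODE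
`(1 + ((1-γ)/2)√(μs)) X'' + (1+γ)√μ X' + √s ∇²F(X)·X' + (1+γ√(μs)) ∇F(X) = 0`
for `L`-smooth, `(γ,μ)`-strongly quasar convex `C²` functions.  The Hessian of
`F` at `x` applied to `v` is formalized as `fderiv ℝ (gradient F) x v`. -/
theorem stmt_9 {E : Type*} [NormedAddCommGroup E] [InnerProductSpace ℝ E]
    [FiniteDimensional ℝ E]
    (F : E → ℝ) (hF : ContDiff ℝ 2 F)
    (L μ γ s : ℝ) (hμ : 0 < μ) (hμL : μ ≤ L) (hγ0 : 0 < γ) (hγ1 : γ ≤ 1)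
    (hLip : ∀ x y : E, ‖gradient F x - gradient F y‖ ≤ L * ‖x - y‖)
    (xstar : E) (hmin : ∀ x : E, F xstar ≤ F x)
    (hqc : ∀ x : E,
      F xstar ≥ F x + (1 / γ) * ⟪gradient F x, xstar - x⟫ + μ / 2 * ‖xstar - x‖ ^ 2)
    (hs0 : 0 < s) (hs1 : s ≤ 1 / L)
    (X X' X'' : ℝ → E)
    (hX : ∀ t : ℝ, HasDerivAt X (X' t) t)
    (hX' : ∀ t : ℝ, HasDerivAt X' (X'' t) t)
    (hode : ∀ t : ℝ, 0 ≤ t →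
      (1 + (1 - γ) / 2 * Real.sqrt (μ * s)) • X'' t
        + ((1 + γ) * Real.sqrt μ) • X' t
        + Real.sqrt s • (fderiv ℝ (gradient F) (X t) (X' t))
        + (1 + γ * Real.sqrt (μ * s)) • gradient F (X t) = 0)
    (hX0 : X' 0 = 0) :
    ∀ t : ℝ, 0 ≤ t →
      F (X t) - F xstar
        ≤ 7 / γ * (F (X 0) - F xstar) * Real.exp (-γ * (Real.sqrt μ / 2) * t) := by
  intro t ht
  exact stmt_9_general (hF.differentiable two_ne_zero)
    (differentiable_gradient_of_contDiff hF) hμ hμL hγ0 hγ1 hLip ⟨hmin, hqc⟩ hs0.le hs1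
    ⟨fun t _ ↦ (hX t).hasDerivWithinAt, fun t _ ↦ (hX' t).hasDerivWithinAt, hode⟩ hX0 ht
end

section
/- Let F : E → ℝ be L-smooth and (γ,μ)-strongly quasar convex with respect to its minimizer x*, for some 0 < μ ≤ L and γ ∈ (0,1]. Then F satisfies the uniform acute angle condition: there exists a > 0 (one may take a = γμ/((2−γ)L)) such that for all x ≠ x*, ⟨∇F(x), x − x*⟩ ≥ a‖∇F(x)‖·‖x − x*‖. -/
open scoped RealInnerProductSpace

/-!
Fix a direction `d = x - x*` and let `k t = F (x* + t d) - F x* - c t ^ 2` with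
`c = γ μ ‖d‖ ^ 2 / (2 (2 - γ))`. Strong quasar convexity along the ray is exactly the Euler-type
inequality `γ k t ≤ t k' t`, so `k t / t ^ γ` is nondecreasing on `(0, ∞)`. Since `x*` is critical
and `∇F` is Lipschitz, `k t = O(t ^ 2) = o(t ^ γ)` at `0⁺`, whence `k ≥ 0`: `F` grows at least
quadratically around `x*`. Feeding this back into the quasar convexity inequality gives
`⟪∇F x, x - x*⟫ ≥ γ μ / (2 - γ) * ‖x - x*‖ ^ 2`, and `‖∇F x‖ ≤ L ‖x - x*‖` turns one factor
`‖x - x*‖` into `‖∇F x‖ / L`.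
-/

open Asymptotics Filter Set Topology

theorem monotoneOn_div_rpow_of_mul_le_mul_deriv {k k' : ℝ → ℝ} {γ : ℝ}
    (hk : ∀ t, 0 < t → HasDerivAt k (k' t) t) (hk' : ∀ t, 0 < t → γ * k t ≤ t * k' t) :
    MonotoneOn (fun t ↦ k t / t ^ γ) (Ioi 0) := by
  have hderiv : ∀ t ∈ Ioi (0 : ℝ), HasDerivAt (fun t ↦ k t / t ^ γ)
      ((k' t * t ^ γ - k t * (γ * t ^ (γ - 1))) / (t ^ γ) ^ 2) t := fun t ht ↦
    (hk t ht).div (Real.hasDerivAt_rpow_const (.inl ht.ne')) (Real.rpow_pos_of_pos ht γ).ne'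
  refine monotoneOn_of_hasDerivWithinAt_nonneg (convex_Ioi 0)
    (fun t ht ↦ (hderiv t ht).continuousAt.continuousWithinAt)
    (fun t ht ↦ (hderiv t (interior_subset ht)).hasDerivWithinAt) fun t ht ↦ ?_
  replace ht : 0 < t := interior_subset ht
  have hpow : t ^ γ = t ^ (γ - 1) * t := by rw [← Real.rpow_add_one ht.ne', sub_add_cancel]
  have hnum : k' t * t ^ γ - k t * (γ * t ^ (γ - 1)) = t ^ (γ - 1) * (t * k' t - γ * k t) := by
    rw [hpow]
    ring
  rw [hnum]
  exact div_nonneg (mul_nonneg (Real.rpow_nonneg ht.le _) (sub_nonneg.2 (hk' t ht))) (sq_nonneg _)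

theorem nonneg_of_mul_le_mul_deriv_of_isLittleO_rpow {k k' : ℝ → ℝ} {γ : ℝ}
    (hk : ∀ t, 0 < t → HasDerivAt k (k' t) t) (hk' : ∀ t, 0 < t → γ * k t ≤ t * k' t)
    (hlittle : k =o[𝓝[>] 0] fun t ↦ t ^ γ) {t : ℝ} (ht : 0 < t) : 0 ≤ k t := by
  have hle : ∀ᶠ s in 𝓝[>] (0 : ℝ), k s / s ^ γ ≤ k t / t ^ γ := by
    filter_upwards [Ioc_mem_nhdsGT ht] with s hs
    exact monotoneOn_div_rpow_of_mul_le_mul_deriv hk hk' hs.1 ht hs.2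
  have hquot : 0 ≤ k t / t ^ γ := le_of_tendsto hlittle.tendsto_div_nhds_zero hle
  simpa [div_mul_cancel₀ _ (Real.rpow_pos_of_pos ht γ).ne'] using
    mul_nonneg hquot (Real.rpow_nonneg ht.le γ)

theorem isLittleO_rpow_rpow_nhdsGE_zero {p q : ℝ} (hp : 0 ≤ p) (hpq : p < q) :
    (fun t : ℝ ↦ t ^ q) =o[𝓝[≥] 0] fun t ↦ t ^ p := by
  have hfactor : Tendsto (fun t : ℝ ↦ t ^ (q - p)) (𝓝[≥] 0) (𝓝 0) := by
    have hcont := Real.continuousAt_rpow_const 0 (q - p) (.inr (sub_nonneg.2 hpq.le))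
    simpa [ContinuousAt, Real.zero_rpow (sub_pos.2 hpq).ne'] using
      hcont.tendsto.mono_left (nhdsWithin_le_nhds (s := Ici 0))
  refine (isLittleO_iff_exists_eq_mul).2 ⟨_, hfactor, ?_⟩
  filter_upwards [self_mem_nhdsWithin] with t ht
  rw [Pi.mul_apply, ← Real.rpow_add_of_nonneg ht (sub_nonneg.2 hpq.le) hp, sub_add_cancel]

section NormedSpace

variable {E : Type*} [NormedAddCommGroup E] [NormedSpace ℝ E] {x₀ : E}

theorem isLittleO_rpow_comp_add_smul {G : Type*} [Norm G] {f : E → G} {p : ℝ}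
    (hf : f =o[𝓝 x₀] fun x ↦ ‖x - x₀‖ ^ p) (d : E) :
    (fun t : ℝ ↦ f (x₀ + t • d)) =o[𝓝[>] 0] fun t ↦ t ^ p := by
  have hline : Tendsto (fun t : ℝ ↦ x₀ + t • d) (𝓝[>] 0) (𝓝 x₀) := by
    have hcont : Continuous fun t : ℝ ↦ x₀ + t • d := by fun_prop
    simpa using (hcont.tendsto 0).mono_left nhdsWithin_le_nhds
  refine (hf.comp_tendsto hline).trans_isBigO (.of_bound (‖d‖ ^ p) ?_)
  filter_upwards [self_mem_nhdsWithin] with t (ht : 0 < t)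
  have hnorm : ‖x₀ + t • d - x₀‖ = ‖d‖ * t := by
    rw [add_sub_cancel_left, norm_smul, Real.norm_of_nonneg ht.le, mul_comm]
  rw [Function.comp_apply, hnorm, Real.mul_rpow (norm_nonneg d) ht.le, norm_mul,
    Real.norm_of_nonneg (Real.rpow_nonneg (norm_nonneg d) p)]

theorem isBigO_norm_sub_pow_succ_of_fderiv_isBigO {G : Type*} [NormedAddCommGroup G]
    [NormedSpace ℝ G] {f : E → G} {n : ℕ} (hf : ∀ᶠ x in 𝓝 x₀, DifferentiableAt ℝ f x)
    (hderiv : fderiv ℝ f =O[𝓝 x₀] fun x ↦ ‖x - x₀‖ ^ n) :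
    (fun x ↦ f x - f x₀) =O[𝓝 x₀] fun x ↦ ‖x - x₀‖ ^ (n + 1) := by
  obtain ⟨C, hC, hbound⟩ := hderiv.exists_pos
  obtain ⟨ε, hε, hball⟩ := Metric.eventually_nhds_iff_ball.1 (hf.and hbound.bound)
  refine IsBigO.of_bound C ?_
  filter_upwards [Metric.ball_mem_nhds x₀ hε] with x hx
  have hsub : Metric.closedBall x₀ ‖x - x₀‖ ⊆ Metric.ball x₀ ε :=
    Metric.closedBall_subset_ball (by simpa [dist_eq_norm] using hx)
  have hfderiv : ∀ y ∈ Metric.closedBall x₀ ‖x - x₀‖, ‖fderiv ℝ f y‖ ≤ C * ‖x - x₀‖ ^ n := by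
    intro y hy
    have hyx : ‖y - x₀‖ ≤ ‖x - x₀‖ := by simpa [dist_eq_norm] using hy
    calc ‖fderiv ℝ f y‖ ≤ C * ‖y - x₀‖ ^ n := by simpa using (hball y (hsub hy)).2
      _ ≤ C * ‖x - x₀‖ ^ n := by gcongr
  calc ‖f x - f x₀‖ ≤ C * ‖x - x₀‖ ^ n * ‖x - x₀‖ :=
        (convex_closedBall x₀ _).norm_image_sub_le_of_norm_fderiv_le
          (fun y hy ↦ (hball y (hsub hy)).1) hfderiv
          (Metric.mem_closedBall_self (norm_nonneg _)) (by simp [dist_eq_norm])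
    _ = C * ‖‖x - x₀‖ ^ (n + 1)‖ := by simp [pow_succ, mul_assoc]

end NormedSpace

section InnerProductSpace

variable {E : Type*} [NormedAddCommGroup E] [InnerProductSpace ℝ E] [CompleteSpace E]
  {F : E → ℝ} {L μ γ : ℝ} {xstar : E}

theorem norm_gradient (F : E → ℝ) (x : E) : ‖gradient F x‖ = ‖fderiv ℝ F x‖ :=
  LinearIsometryEquiv.norm_map _ _

theorem gradient_eq_zero_of_isLocalMin (h : IsLocalMin F xstar) : gradient F xstar = 0 := by
  simp [gradient, h.fderiv_eq_zero]

theorem hasDerivAt_comp_add_smul {x d : E} {t : ℝ} (hF : DifferentiableAt ℝ F (x + t • d)) :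
    HasDerivAt (fun s : ℝ ↦ F (x + s • d)) ⟪gradient F (x + t • d), d⟫ t := by
  have hline : HasDerivAt (fun s : ℝ ↦ x + s • d) d t := by
    simpa using ((hasDerivAt_id t).smul_const d).const_add x
  rw [inner_gradient_left]
  exact hF.hasFDerivAt.comp_hasDerivAt t hline

theorem isLittleO_norm_sub_rpow_of_gradient_isBigO
    (hF : ∀ᶠ x in 𝓝 xstar, DifferentiableAt ℝ F x)
    (hgrad : gradient F =O[𝓝 xstar] fun x ↦ x - xstar) (hγ0 : 0 ≤ γ) (hγ2 : γ < 2) :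
    (fun x ↦ F x - F xstar) =o[𝓝 xstar] fun x ↦ ‖x - xstar‖ ^ γ := by
  have hfderiv : fderiv ℝ F =O[𝓝 xstar] fun x ↦ ‖x - xstar‖ ^ 1 :=
    .of_norm_left (by simpa [← norm_gradient] using hgrad)
  have hnorm : Tendsto (fun x ↦ ‖x - xstar‖) (𝓝 xstar) (𝓝[≥] 0) :=
    tendsto_nhdsWithin_iff.2
      ⟨tendsto_norm_sub_self xstar, .of_forall fun x ↦ norm_nonneg (x - xstar)⟩
  refine (isBigO_norm_sub_pow_succ_of_fderiv_isBigO hF hfderiv).trans_isLittleO ?_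
  simpa [Function.comp_def, one_add_one_eq_two] using
    (isLittleO_rpow_rpow_nhdsGE_zero hγ0 hγ2).comp_tendsto hnorm

/-- `F` is `(γ, μ)`-strongly quasar convex with respect to `xstar`. Only the inequality is recorded:
that `xstar` minimizes `F` is not part of the definition. -/
def StronglyQuasarConvexAt (F : E → ℝ) (γ μ : ℝ) (xstar : E) : Prop :=
  ∀ x, F xstar ≥ F x + (1 / γ) * ⟪gradient F x, xstar - x⟫ + μ / 2 * ‖xstar - x‖ ^ 2

namespace StronglyQuasarConvexAt

theorem mul_sub_add_le_inner_gradient (h : StronglyQuasarConvexAt F γ μ xstar) (hγ0 : 0 < γ)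
    (x : E) :
    γ * (F x - F xstar) + γ * μ / 2 * ‖x - xstar‖ ^ 2 ≤ ⟪gradient F x, x - xstar⟫ := by
  have hx := h x
  rw [← neg_sub x xstar, inner_neg_right, norm_neg, one_div, ge_iff_le] at hx
  have hmul := mul_le_mul_of_nonneg_left hx hγ0.le
  have hcancel : γ * (γ⁻¹ * ⟪gradient F x, x - xstar⟫) = ⟪gradient F x, x - xstar⟫ :=
    mul_inv_cancel_left₀ hγ0.ne' _
  linarith

theorem quadratic_growth (h : StronglyQuasarConvexAt F γ μ xstar) (hF : Differentiable ℝ F)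
    (hγ0 : 0 < γ) (hγ2 : γ < 2)
    (hlittle : (fun x ↦ F x - F xstar) =o[𝓝 xstar] fun x ↦ ‖x - xstar‖ ^ γ) (x : E) :
    γ * μ / (2 * (2 - γ)) * ‖x - xstar‖ ^ 2 ≤ F x - F xstar := by
  set d := x - xstar with hd
  set c := γ * μ / (2 * (2 - γ)) * ‖d‖ ^ 2 with hc
  have hcγ : c * (2 - γ) = γ * μ / 2 * ‖d‖ ^ 2 := by
    have : 2 - γ ≠ 0 := (sub_pos.2 hγ2).ne'
    rw [hc]
    field_simp
  have hderiv (t : ℝ) : HasDerivAt (fun t ↦ F (xstar + t • d) - F xstar - c * t ^ 2)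
      (⟪gradient F (xstar + t • d), d⟫ - c * (2 * t)) t := by
    have hsq : HasDerivAt (fun s : ℝ ↦ c * s ^ 2) (c * (2 * t)) t := by
      simpa using (hasDerivAt_pow 2 t).const_mul c
    exact ((hasDerivAt_comp_add_smul (hF _)).sub_const (F xstar)).sub hsq
  have heuler (t : ℝ) (ht : 0 < t) : γ * (F (xstar + t • d) - F xstar - c * t ^ 2)
      ≤ t * (⟪gradient F (xstar + t • d), d⟫ - c * (2 * t)) := by
    have hray := h.mul_sub_add_le_inner_gradient hγ0 (xstar + t • d)
    rw [add_sub_cancel_left, inner_smul_right, norm_smul, Real.norm_of_nonneg ht.le] at hray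
    linear_combination hray + t ^ 2 * hcγ
  have hsq_little : (fun t : ℝ ↦ c * t ^ 2) =o[𝓝[>] 0] fun t ↦ t ^ γ := by
    simpa using ((isLittleO_rpow_rpow_nhdsGE_zero hγ0.le hγ2).mono
      (nhdsWithin_mono 0 Ioi_subset_Ici_self)).const_mul_left c
  have hone := nonneg_of_mul_le_mul_deriv_of_isLittleO_rpow (fun t _ ↦ hderiv t) heuler
    ((isLittleO_rpow_comp_add_smul hlittle d).sub hsq_little) one_pos
  simpa [hd] using hone

theorem mul_norm_sq_le_inner_gradient (h : StronglyQuasarConvexAt F γ μ xstar)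
    (hF : Differentiable ℝ F) (hγ0 : 0 < γ) (hγ2 : γ < 2)
    (hlittle : (fun x ↦ F x - F xstar) =o[𝓝 xstar] fun x ↦ ‖x - xstar‖ ^ γ) (x : E) :
    γ * μ / (2 - γ) * ‖x - xstar‖ ^ 2 ≤ ⟪gradient F x, x - xstar⟫ := by
  have h2γ : 2 - γ ≠ 0 := (sub_pos.2 hγ2).ne'
  calc γ * μ / (2 - γ) * ‖x - xstar‖ ^ 2
      = γ * (γ * μ / (2 * (2 - γ)) * ‖x - xstar‖ ^ 2) + γ * μ / 2 * ‖x - xstar‖ ^ 2 := by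
        field_simp
        ring
    _ ≤ γ * (F x - F xstar) + γ * μ / 2 * ‖x - xstar‖ ^ 2 := by
        gcongr
        exact h.quadratic_growth hF hγ0 hγ2 hlittle x
    _ ≤ ⟪gradient F x, x - xstar⟫ := h.mul_sub_add_le_inner_gradient hγ0 x

end StronglyQuasarConvexAt

theorem stmt_11_general (hF : Differentiable ℝ F) (hL : 0 < L) (hμ : 0 < μ)
    (hγ0 : 0 < γ) (hγ2 : γ < 2) (hgrad : ∀ x, ‖gradient F x‖ ≤ L * ‖x - xstar‖)
    (hqc : StronglyQuasarConvexAt F γ μ xstar) :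
    ∃ a : ℝ, 0 < a ∧ a = γ * μ / ((2 - γ) * L) ∧
      ∀ x : E, ⟪gradient F x, x - xstar⟫ ≥ a * (‖gradient F x‖ * ‖x - xstar‖) := by
  have h2γ : 0 < 2 - γ := sub_pos.2 hγ2
  refine ⟨_, by positivity, rfl, fun x ↦ ?_⟩
  have hlittle := isLittleO_norm_sub_rpow_of_gradient_isBigO (.of_forall hF)
    (.of_bound L (.of_forall hgrad)) hγ0.le hγ2
  calc γ * μ / ((2 - γ) * L) * (‖gradient F x‖ * ‖x - xstar‖)
      ≤ γ * μ / ((2 - γ) * L) * (L * ‖x - xstar‖ * ‖x - xstar‖) := by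
        gcongr
        exact hgrad x
    _ = γ * μ / (2 - γ) * ‖x - xstar‖ ^ 2 := by field_simp
    _ ≤ ⟪gradient F x, x - xstar⟫ := hqc.mul_norm_sq_le_inner_gradient hF hγ0 hγ2 hlittle x

end InnerProductSpace

/-- an `L`-smooth, `(γ,μ)`-strongly quasar convex function
satisfies the uniform acute angle condition, with constant
`a = γμ/((2-γ)L) > 0`. -/
theorem stmt_11 {E : Type*} [NormedAddCommGroup E] [InnerProductSpace ℝ E]
    [FiniteDimensional ℝ E]
    (F : E → ℝ) (hF : Differentiable ℝ F)
    (L μ γ : ℝ) (hμ : 0 < μ) (hμL : μ ≤ L) (hγ0 : 0 < γ) (hγ1 : γ ≤ 1)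
    (hLip : ∀ x y : E, ‖gradient F x - gradient F y‖ ≤ L * ‖x - y‖)
    (xstar : E) (hmin : ∀ x : E, F xstar ≤ F x)
    (hqc : ∀ x : E,
      F xstar ≥ F x + (1 / γ) * ⟪gradient F x, xstar - x⟫ + μ / 2 * ‖xstar - x‖ ^ 2) :
    ∃ a : ℝ, 0 < a ∧ a = γ * μ / ((2 - γ) * L) ∧
      ∀ x : E, x ≠ xstar →
        ⟪gradient F x, x - xstar⟫ ≥ a * (‖gradient F x‖ * ‖x - xstar‖) := by
  have hcrit : gradient F xstar = 0 := gradient_eq_zero_of_isLocalMin (.of_forall hmin)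
  obtain ⟨a, ha, haeq, hangle⟩ := stmt_11_general hF (hμ.trans_le hμL) hμ hγ0 (by linarith)
    (fun x ↦ by simpa [hcrit] using hLip x xstar) hqc
  exact ⟨a, ha, haeq, fun x _ ↦ hangle x⟩
end
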